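/- Let σ be a saturation function. There exists ε₀>0 such that, for every ε∈(0,ε₀), there exists a vector K_ε∈ℝ⁴ rendering the system (S_ε) globally asymptotically stable with respect to the origin. -/

import Mathlib

open Real Filter MeasureTheory intervalIntegral RealInnerProductSpace

noncomputable section

/-- A saturation function: odd, globally Lipschitz, sign-definite, with finite positive limits
of `σ` at `+∞` and of `σ ξ / ξ` at `0`, non-decreasing, differentiable on `(0,∞)` with
non-increasing derivative there. -/
def IsSaturation (σ : ℝ → ℝ) : Prop :=
  (∀ ξ, σ (-ξ) = -σ ξ) ∧
  (∃ L : NNReal, LipschitzWith L σ) ∧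
  (∀ ξ : ℝ, ξ ≠ 0 → σ ξ * ξ > 0) ∧
  (∃ l > 0, Tendsto σ atTop (nhds l)) ∧
  (∃ l > 0, Tendsto (fun ξ => σ ξ / ξ) (nhdsWithin 0 {(0:ℝ)}ᶜ) (nhds l)) ∧
  Monotone σ ∧
  DifferentiableOn ℝ σ (Set.Ioi 0) ∧
  AntitoneOn (deriv σ) (Set.Ioi 0)

/-- `J₂(ω)`, the 4×4 matrix `[[ωA₀, I₂],[0₂, ωA₀]]` with `A₀ = [[0,-1],[1,0]]`. -/
def J2mat (ω : ℝ) : Matrix (Fin 4) (Fin 4) ℝ :=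
  !![0, -ω, 1, 0; ω, 0, 0, 1; 0, 0, 0, -ω; 0, 0, ω, 0]

/-- `(A, b)` is controllable: `(b, Ab, A²b, A³b)` spans `ℝ⁴`. -/
def Controllable (A : Matrix (Fin 4) (Fin 4) ℝ) (b : Fin 4 → ℝ) : Prop :=
  Submodule.span ℝ {b, A.mulVec b, (A * A).mulVec b, (A * A * A).mulVec b} = ⊤

/-- Global asymptotic stability with respect to the origin of the (possibly time-varying)
system `ẋ = F t x` on `ℝ⁴`: Lyapunov stability uniform in the initial time, plus global
attractivity. -/
def IsGAS (F : ℝ → (Fin 4 → ℝ) → (Fin 4 → ℝ)) : Prop :=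
  (∀ δ > 0, ∃ η > 0, ∀ t₀ : ℝ, 0 ≤ t₀ → ∀ x : ℝ → Fin 4 → ℝ,
      (∀ t, t₀ ≤ t → HasDerivAt x (F t (x t)) t) → ‖x t₀‖ ≤ η →
      ∀ t, t₀ ≤ t → ‖x t‖ ≤ δ) ∧
  (∀ t₀ : ℝ, 0 ≤ t₀ → ∀ x : ℝ → Fin 4 → ℝ,
      (∀ t, t₀ ≤ t → HasDerivAt x (F t (x t)) t) →
      Tendsto x atTop (nhds 0))

/-- The closed-loop vector field of the system `(S_ε)` with feedback vector `K`:
`ẋ₁ = (2π/ε)A₀x₁ + x₂`, `ẋ₂ = (2π/ε)A₀x₂ - e₂ σ(Kᵀx)`. -/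
def Svf (σ : ℝ → ℝ) (ε : ℝ) (K : Fin 4 → ℝ) (x : Fin 4 → ℝ) : Fin 4 → ℝ :=
  (J2mat (2 * Real.pi / ε)).mulVec x - σ (∑ i, K i * x i) • (![0, 0, 0, 1] : Fin 4 → ℝ)

/-! In the frame rotating with the oscillator, the plant is a double integrator `z' = y` driven
along the rotating direction `u`, which over one period `P` excites all directions equally. The
feedback `σ(⟪u, k² z + k y⟫)` with small `k` makes the motion of `k² z + k y` nearly affine over
long windows of time.

Cocoercivity of the monotone Lipschitz `σ` gives a delay functional that is nonnegative and whose
derivative is at most `-(k / P) ‖y(t) - y(t - P)‖²` up to an error of order `k²`. Concavity of `σ`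
and excitation bound `‖y(t) - y(t - P)‖` below by a multiple of `σ(2ρ)` on a fixed fraction of each
window, where `ρ` is the amplitude of the motion there. The functional therefore loses a multiple
of `σ(2ρ)²` over each window, so these losses are summable, which makes the amplitudes tend to
zero, and bounded by the initial value of the functional, which gives stability. -/

/-! ### Monotone and concave feedbacks -/

section MonotoneLipschitz

variable {f : ℝ → ℝ} {L : NNReal}

lemma mul_sub_le_integral_of_monotone (hf : Monotone f) (a b : ℝ) :
    f a * (b - a) ≤ ∫ r in a..b, f r := by
  rcases le_total a b with hab | hba
  · calc f a * (b - a) = ∫ _ in a..b, f a := by simp [mul_comm]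
      _ ≤ ∫ r in a..b, f r :=
        integral_mono_on hab (by simp) hf.intervalIntegrable fun r hr => hf hr.1
  · have upper : ∫ r in b..a, f r ≤ ∫ _ in b..a, f a :=
      integral_mono_on hba hf.intervalIntegrable (by simp) fun r hr => hf hr.2
    rw [intervalIntegral.integral_const, smul_eq_mul] at upper
    rw [integral_symm]
    linarith

lemma monotone_mul_sub_of_lipschitzWith (hf : LipschitzWith L f) :
    Monotone fun x => L * x - f x := by
  intro x y hxy
  have hdist := hf.dist_le_mul y x
  rw [Real.dist_eq, Real.dist_eq, abs_of_nonneg (sub_nonneg.2 hxy)] at hdist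
  have := le_abs_self (f y - f x)
  dsimp only
  linarith

lemma integral_le_mul_sub_add_of_lipschitzWith (hf : LipschitzWith L f) (a b : ℝ) :
    ∫ r in a..b, f r ≤ f a * (b - a) + L / 2 * (b - a) ^ 2 := by
  have hmono := mul_sub_le_integral_of_monotone (monotone_mul_sub_of_lipschitzWith hf) a b
  rw [intervalIntegral.integral_sub ((continuous_const_mul _).intervalIntegrable _ _)
      (hf.continuous.intervalIntegrable _ _),
    intervalIntegral.integral_const_mul, integral_id] at hmono
  linarith

/- Move from `b` to the minimiser `b - (f b - f a) / L` of the quadratic upper model at `b`, and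
from there to `a` along the supporting line at `a`. -/
lemma sq_sub_le_of_monotone_of_lipschitzWith (hf : Monotone f) (hL : LipschitzWith L f)
    (hLpos : 0 < L) (a b : ℝ) :
    (f a - f b) ^ 2 ≤ 2 * L * (f a * (a - b) - ∫ r in b..a, f r) := by
  have : (0 : ℝ) < L := hLpos
  set c := b - (f b - f a) / L
  have hbc : L * (c - b) = -(f b - f a) := by simp only [c]; field_simp; ring
  have quadratic := integral_le_mul_sub_add_of_lipschitzWith hL b c
  have supporting := mul_sub_le_integral_of_monotone hf a c
  have split : (∫ r in b..a, f r) + ∫ r in a..c, f r = ∫ r in b..c, f r :=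
    integral_add_adjacent_intervals hf.intervalIntegrable hf.intervalIntegrable
  have bound : ∫ r in b..a, f r ≤ f b * (c - b) + L / 2 * (c - b) ^ 2 - f a * (c - a) := by
    linarith
  have key := mul_le_mul_of_nonneg_left bound (by positivity : (0 : ℝ) ≤ 2 * L)
  have expand : 2 * (L : ℝ) * (f b * (c - b) + L / 2 * (c - b) ^ 2 - f a * (c - a)) =
      2 * (f b - f a) * (L * (c - b)) + (L * (c - b)) ^ 2 + 2 * L * (f a * (a - b)) := by ring
  rw [expand, hbc] at key
  linarith

end MonotoneLipschitz

/-- The saturation functions without the existence of the limits at `0` and `+∞` and without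
differentiability. -/
structure IsConcaveFeedback (σ : ℝ → ℝ) (L : NNReal) : Prop where
  odd : ∀ x, σ (-x) = -σ x
  lipschitz : LipschitzWith L σ
  monotone : Monotone σ
  pos : ∀ x, 0 < x → 0 < σ x
  concaveOn : ConcaveOn ℝ (Set.Ici 0) σ

lemma IsSaturation.exists_isConcaveFeedback {σ : ℝ → ℝ} (hσ : IsSaturation σ) :
    ∃ L, IsConcaveFeedback σ L := by
  obtain ⟨odd, ⟨L, lipschitz⟩, signed, -, -, monotone, differentiable, antitone⟩ := hσ
  rw [← interior_Ici] at differentiable antitone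
  exact ⟨L, odd, lipschitz, monotone, fun x hx => pos_of_mul_pos_left (signed x hx.ne') hx.le,
    antitone.concaveOn_of_deriv (convex_Ici 0) lipschitz.continuous.continuousOn differentiable⟩

/-- The primitive of `f` vanishing at `0`. -/
def primitive (f : ℝ → ℝ) (x : ℝ) : ℝ := ∫ r in 0..x, f r

namespace IsConcaveFeedback

variable {σ : ℝ → ℝ} {L : NNReal} (hσ : IsConcaveFeedback σ L)
include hσ

lemma map_zero : σ 0 = 0 := by
  have := hσ.odd 0
  rw [neg_zero] at this
  linarith

lemma abs_le_mul_abs (x : ℝ) : |σ x| ≤ L * |x| := by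
  simpa [hσ.map_zero] using hσ.lipschitz.dist_le_mul x 0

lemma lipschitz_pos : 0 < L := by
  have h := hσ.abs_le_mul_abs 1
  rw [abs_one, mul_one] at h
  exact_mod_cast (abs_pos.2 (hσ.pos 1 one_pos).ne').trans_le h

lemma map_nonneg {x : ℝ} (hx : 0 ≤ x) : 0 ≤ σ x := hσ.map_zero ▸ hσ.monotone hx

lemma map_abs (x : ℝ) : σ |x| = |σ x| := by
  rcases le_total 0 x with hx | hx
  · rw [abs_of_nonneg hx, abs_of_nonneg (hσ.map_nonneg hx)]
  · have := hσ.map_nonneg (neg_nonneg.2 hx)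
    rw [hσ.odd] at this
    rw [abs_of_nonpos hx, hσ.odd, abs_of_nonpos (neg_nonneg.1 this)]

lemma abs_le_map {x M : ℝ} (hx : |x| ≤ M) : |σ x| ≤ σ M :=
  hσ.map_abs x ▸ hσ.monotone hx

lemma lt_of_mul_map_sq_lt {c x y : ℝ} (hc : 0 < c) (hy : 0 ≤ y)
    (h : c * σ (2 * x) ^ 2 < c * σ (2 * y) ^ 2) : x < y :=
  lt_of_mul_lt_mul_left (hσ.monotone.reflect_lt (lt_of_pow_lt_pow_left₀ 2
    (hσ.map_nonneg (mul_nonneg zero_le_two hy)) (lt_of_mul_lt_mul_left h hc.le))) zero_le_two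

lemma mul_map_le_mul_map {x M : ℝ} (hx : 0 ≤ x) (hxM : x ≤ M) : x * σ M ≤ M * σ x := by
  rcases hx.eq_or_lt with rfl | hx0
  · simp [hσ.map_zero]
  have hM : 0 < M := hx0.trans_le hxM
  have chord : (1 - x / M) * σ 0 + x / M * σ M ≤ σ ((1 - x / M) * 0 + x / M * M) :=
    hσ.concaveOn.2 Set.self_mem_Ici hM.le (sub_nonneg.2 (div_le_one_of_le₀ hxM hM.le))
      (by positivity) (by ring)
  rw [hσ.map_zero, mul_zero, zero_add, zero_add, div_mul_cancel₀ x hM.ne'] at chord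
  calc x * σ M = M * (x / M * σ M) := by field_simp
    _ ≤ M * σ x := by gcongr

lemma map_mul_sq_le {x M : ℝ} (hx : |x| ≤ M) : σ M * x ^ 2 ≤ M * (σ x * x) := by
  have even : σ x * x = σ |x| * |x| := by
    rcases abs_choice x with h | h <;> rw [h]
    rw [hσ.odd, neg_mul_neg]
  rw [even, ← sq_abs]
  have := mul_le_mul_of_nonneg_right (hσ.mul_map_le_mul_map (abs_nonneg x) hx) (abs_nonneg x)
  linarith

lemma map_mul_sub_le_map_mul {x η δ M : ℝ} (hM : 0 < M) (hx : |x| ≤ M) (hη : |x - η| ≤ δ)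
    (hδ : δ ≤ M) : σ M * (η ^ 2 / (2 * M) - 2 * δ) ≤ σ x * η := by
  have hS : 0 ≤ σ M := hσ.map_nonneg hM.le
  have hδ0 : 0 ≤ δ := (abs_nonneg _).trans hη
  have main : σ M * (x ^ 2 / M) ≤ σ x * x := by
    rw [← mul_div_assoc, div_le_iff₀ hM, mul_comm _ M]
    exact hσ.map_mul_sq_le hx
  have error : σ x * (x - η) ≤ σ M * δ :=
    calc σ x * (x - η) ≤ |σ x| * |x - η| := abs_mul (σ x) _ ▸ le_abs_self _
      _ ≤ σ M * δ := by gcongr; exact hσ.abs_le_map hx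
  have square : η ^ 2 / (2 * M) - δ ≤ x ^ 2 / M := by
    have hsq : (x - η) ^ 2 ≤ δ * M := by
      rw [← sq_abs]; nlinarith [abs_nonneg (x - η)]
    rw [sub_le_iff_le_add, div_le_iff₀ (by positivity)]
    have : (x ^ 2 / M + δ) * (2 * M) = 2 * x ^ 2 + 2 * (δ * M) := by field_simp
    rw [this]
    nlinarith [sq_nonneg (2 * x - η)]
  have := mul_le_mul_of_nonneg_left square hS
  linarith

lemma continuous_primitive : Continuous (primitive σ) :=
  intervalIntegral.continuous_primitive (fun _ _ => hσ.monotone.intervalIntegrable) 0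

lemma primitive_sub_primitive_le (a b : ℝ) :
    primitive σ a - primitive σ b ≤ σ a * (a - b) - (σ a - σ b) ^ 2 / (2 * L) := by
  have hL : (0 : ℝ) < L := hσ.lipschitz_pos
  have cocoercive :=
    sq_sub_le_of_monotone_of_lipschitzWith hσ.monotone hσ.lipschitz hσ.lipschitz_pos a b
  rw [primitive, primitive, integral_interval_sub_left hσ.monotone.intervalIntegrable
    hσ.monotone.intervalIntegrable, le_sub_comm, div_le_iff₀' (by positivity)]
  exact cocoercive

lemma sq_le_mul_primitive (x : ℝ) : σ x ^ 2 ≤ 2 * L * primitive σ x := by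
  have cocoercive :=
    sq_sub_le_of_monotone_of_lipschitzWith hσ.monotone hσ.lipschitz hσ.lipschitz_pos 0 x
  rw [hσ.map_zero, integral_symm] at cocoercive
  rw [primitive]
  linarith

lemma primitive_le_sq (x : ℝ) : primitive σ x ≤ L / 2 * x ^ 2 := by
  simpa [primitive, hσ.map_zero] using integral_le_mul_sub_add_of_lipschitzWith hσ.lipschitz 0 x

end IsConcaveFeedback

/-! ### Integrals, derivatives and sampling -/

lemma sq_integral_le_mul_integral_sq {f : ℝ → ℝ} {a b : ℝ} (hab : a ≤ b)
    (hf : ContinuousOn f (Set.Icc a b)) :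
    (∫ t in a..b, f t) ^ 2 ≤ (b - a) * ∫ t in a..b, f t ^ 2 := by
  rcases hab.eq_or_lt with rfl | hlt
  · simp
  have hlen : 0 < b - a := sub_pos.2 hlt
  set m := (∫ t in a..b, f t) / (b - a) with hm
  rw [← Set.uIcc_of_le hab] at hf
  have tangent : ∫ t in a..b, (2 * m * f t - m ^ 2) ≤ ∫ t in a..b, f t ^ 2 :=
    integral_mono_on hab (by apply ContinuousOn.intervalIntegrable; fun_prop)
      (hf.pow 2).intervalIntegrable fun t _ => by linarith [sq_nonneg (f t - m)]
  rw [intervalIntegral.integral_sub (by apply ContinuousOn.intervalIntegrable; fun_prop) (by simp),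
    intervalIntegral.integral_const_mul, intervalIntegral.integral_const, smul_eq_mul] at tangent
  have hint : ∫ t in a..b, f t = m * (b - a) := by rw [hm]; field_simp
  rw [hint] at tangent ⊢
  have := mul_le_mul_of_nonneg_left tangent hlen.le
  linarith

lemma exists_forall_hasDerivAt_of_continuousOn_Ici {f : ℝ → ℝ} {a : ℝ}
    (hf : ContinuousOn f (Set.Ici a)) : ∃ F : ℝ → ℝ, ∀ t, a ≤ t → HasDerivAt F (f t) t := by
  have hcont : Continuous fun t => f (max a t) :=
    hf.comp_continuous (by fun_prop) fun t => le_max_left a t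
  refine ⟨fun t => ∫ r in a..t, f (max a r), fun t ht => ?_⟩
  simpa only [max_eq_right ht] using (hcont.integral_hasStrictDerivAt a t).hasDerivAt

lemma norm_sub_le_integral_of_hasDerivAt {E : Type*} [NormedAddCommGroup E] [NormedSpace ℝ E]
    {f f' : ℝ → E} {B : ℝ → ℝ} {a b : ℝ} (hab : a ≤ b)
    (hf : ∀ t ∈ Set.Icc a b, HasDerivAt f (f' t) t) (hB : ContinuousOn B (Set.Icc a b))
    (hbound : ∀ t ∈ Set.Icc a b, ‖f' t‖ ≤ B t) : ‖f b - f a‖ ≤ ∫ t in a..b, B t := by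
  have hIoo := Set.Ioo_subset_Icc_self (a := a) (b := b)
  refine norm_sub_le_integral_of_norm_deriv_le_of_le hab
    (fun t ht => (hf t ht).continuousAt.continuousWithinAt)
    (fun t ht => (hf t (hIoo ht)).differentiableAt.differentiableWithinAt)
    (Eventually.of_forall fun t ht => ?_) (hB.intervalIntegrable_of_Icc hab)
  rw [(hf t (hIoo ht)).deriv]
  exact hbound t (hIoo ht)

lemma sub_le_mul_sub_of_hasDerivAt_le {f : ℝ → ℝ} {a b C : ℝ} (hab : a ≤ b)
    (hf : ∀ t ∈ Set.Icc a b, ∃ f', HasDerivAt f f' t ∧ f' ≤ C) : f b - f a ≤ C * (b - a) := by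
  choose! f' hf' hC using hf
  refine (convex_Icc a b).image_sub_le_mul_sub_of_deriv_le
    (fun t ht => (hf' t ht).continuousAt.continuousWithinAt)
    (fun t ht => (hf' t (interior_subset ht)).differentiableAt.differentiableWithinAt)
    (fun t ht => ?_) a (Set.left_mem_Icc.2 hab) b (Set.right_mem_Icc.2 hab) hab
  rw [(hf' t (interior_subset ht)).deriv]
  exact hC t (interior_subset ht)

lemma exists_forall_le_norm_add_smul {E : Type*} [NormedAddCommGroup E] [NormedSpace ℝ E]
    (a b : E) {H : ℝ} (hH : 0 ≤ H) :
    ∃ c ∈ Set.Icc 0 (3 / 4 * H), ∀ t ∈ Set.Icc c (c + H / 8),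
      (‖a‖ + H * ‖b‖) / 8 ≤ ‖a + t • b‖ := by
  rcases le_total ((‖a‖ + H * ‖b‖) / 4) ‖a‖ with hlarge | hsmall
  · refine ⟨0, ⟨le_rfl, by positivity⟩, fun t ht => ?_⟩
    have triangle := norm_sub_le_norm_add a (t • b)
    rw [norm_smul, Real.norm_of_nonneg ht.1] at triangle
    have := mul_le_mul_of_nonneg_right ht.2 (norm_nonneg b)
    linarith [norm_nonneg a]
  · refine ⟨3 / 4 * H, ⟨by positivity, le_rfl⟩, fun t ht => ?_⟩
    have triangle := norm_sub_le_norm_add (t • b) a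
    rw [norm_smul, Real.norm_of_nonneg ((by positivity : 0 ≤ 3 / 4 * H).trans ht.1), add_comm]
      at triangle
    have := mul_le_mul_of_nonneg_right ht.1 (norm_nonneg b)
    have : 0 ≤ H * ‖b‖ := by positivity
    linarith [norm_nonneg a]

lemma eventually_lt_of_continuous_of_map_zero {f : ℝ → ℝ} (hf : Continuous f) (hf0 : f 0 = 0)
    {c : ℝ} (hc : 0 < c) : ∀ᶠ x in nhdsWithin 0 (Set.Ioi 0), f x < c :=
  ((hf.tendsto' 0 0 hf0).mono_left nhdsWithin_le_nhds).eventually_lt_const hc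

lemma sum_add_le_of_add_le {a V : ℕ → ℝ} (h : ∀ n, V (n + 1) + a n ≤ V n) (n : ℕ) :
    ∑ i ∈ Finset.range n, a i + V n ≤ V 0 := by
  induction n with
  | zero => simp
  | succ n ih => rw [Finset.sum_range_succ]; linarith [h n]

lemma mem_Icc_add_floor_mul {t₀ t T H : ℝ} (hT : 0 < T) (hTH : T ≤ H) (ht : t₀ ≤ t) :
    t ∈ Set.Icc (t₀ + ⌊(t - t₀) / T⌋₊ * T) (t₀ + ⌊(t - t₀) / T⌋₊ * T + H) := by
  have lower := (le_div_iff₀ hT).1 (Nat.floor_le (div_nonneg (sub_nonneg.2 ht) hT.le))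
  have upper := (div_lt_iff₀ hT).1 (Nat.lt_floor_add_one ((t - t₀) / T))
  exact ⟨by linarith, by linarith⟩

/-! ### Double integrator along an exciting direction -/

section Trajectories

variable {E : Type*} [NormedAddCommGroup E] [InnerProductSpace ℝ E]

/-- Persistently exciting periodic input direction: over one period `P`, the mean square of each
component of `u` is at least `β`. -/
structure IsExciting (u : ℝ → E) (P β : ℝ) : Prop where
  continuous : Continuous u
  period_pos : 0 < P
  periodic : Function.Periodic u P
  norm_le_one : ∀ t, ‖u t‖ ≤ 1
  level_pos : 0 < β
  level_le_one : β ≤ 1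
  le_integral_sq : ∀ v, β * P * ‖v‖ ^ 2 ≤ ∫ t in 0..P, ⟪u t, v⟫ ^ 2

/-- The vector `k² z + k y` whose component along the input direction is fed back. -/
def feedbackState (k : ℝ) (z y : ℝ → E) (t : ℝ) : E := k ^ 2 • z t + k • y t

/-- The scalar fed to the nonlinearity. -/
def output (u : ℝ → E) (k : ℝ) (z y : ℝ → E) (t : ℝ) : ℝ := ⟪u t, feedbackState k z y t⟫

/-- Solutions on `[t₀, ∞)` of the closed-loop double integrator `z' = y`,
`y' = -σ(⟪u, k² z + k y⟫) u`. -/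
structure IsTrajectory (σ : ℝ → ℝ) (u : ℝ → E) (k t₀ : ℝ) (z y : ℝ → E) : Prop where
  hasDerivAt_position : ∀ t, t₀ ≤ t → HasDerivAt z (y t) t
  hasDerivAt_velocity : ∀ t, t₀ ≤ t → HasDerivAt y (-(σ (output u k z y t) • u t)) t

/-- Bounds the feedback state on a window of length `H` starting at `t`, see
`IsTrajectory.norm_feedbackState_le`. -/
def amplitude (k H : ℝ) (z y : ℝ → E) (t : ℝ) : ℝ :=
  ‖feedbackState k z y t‖ + H * ‖k ^ 2 • y t‖

/-- The relative error of the affine prediction of the feedback state on a window of length `H`,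
see `IsTrajectory.norm_feedbackState_sub_affine_le`. -/
def driftGain (L H k : ℝ) : ℝ := (k ^ 2 * H + k) * H * L

/-- Bounds the velocity on a window, in units of `amplitude`; see
`IsTrajectory.norm_velocity_le`. -/
def velocityGain (L H k : ℝ) : ℝ := 1 / (k ^ 2 * H) + L * 2 * H

/-- Bounds the state on a window, in units of `amplitude`; see `IsTrajectory.norm_state_le`. -/
def stateGain (L H k : ℝ) : ℝ :=
  velocityGain L H k + (2 + k * velocityGain L H k) / k ^ 2

/-- Bounds the functional `zamesFalb` at the start of a window, in units of the squared
`amplitude`; see `IsTrajectory.zamesFalb_le`. -/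
def storageGain (L P H k : ℝ) : ℝ := 4 * L * P + k ^ 2 * P / 2 * velocityGain L H k ^ 2

/-- The feedback gain `k` is small and the window length `H` is large compared with the period. -/
structure IsTuned (L P β H k : ℝ) : Prop where
  gain_pos : 0 < k
  period_le : 2048 * P ≤ β * H
  driftGain_le : 4096 * driftGain L H k ≤ β
  storage_le : 2 * L * P * k ≤ 1
  error_le : 131072 * (k * P * (L + 1)) ≤ β ^ 2

lemma exists_isTuned (L : ℝ) {P β : ℝ} (hβ : 0 < β) : ∃ H k, IsTuned L P β H k := by
  have small (f : ℝ → ℝ) (hf : Continuous f) (hf0 : f 0 = 0) {c : ℝ} (hc : 0 < c) :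
      ∀ᶠ k in nhdsWithin 0 (Set.Ioi 0), f k ≤ c :=
    (eventually_lt_of_continuous_of_map_zero hf hf0 hc).mono fun _ => le_of_lt
  set H := 2048 * P / β
  obtain ⟨k, hk, hdrift, hstorage, herror⟩ := (eventually_mem_nhdsWithin.and <|
    (small (fun k => 4096 * driftGain L H k) (by unfold driftGain; fun_prop)
      (by simp [driftGain]) hβ).and <|
    (small (fun k => 2 * L * P * k) (by fun_prop) (by simp) one_pos).and <|
    small (fun k => 131072 * (k * P * (L + 1))) (by fun_prop) (by simp) (pow_pos hβ 2)).exists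
  exact ⟨H, k, hk, (mul_div_cancel₀ _ hβ.ne').ge, hdrift, hstorage, herror⟩

/-- The increment of the velocity over the last period. -/
def velocityDefect (P : ℝ) (y : ℝ → E) (t : ℝ) : E := y t - y (t - P)

/-- The deviation of the position from free motion over the last period. -/
def positionDefect (P : ℝ) (z y : ℝ → E) (t : ℝ) : E := z t - z (t - P) - P • y t

/-- The Lyapunov functional attached to the Zames–Falb multiplier `1 - exp (-P s)`. The function
`e` stands for an antiderivative of the stored energy `primitive σ (output u k z y t)`. -/
def zamesFalb (P k : ℝ) (e : ℝ → ℝ) (z y : ℝ → E) (t : ℝ) : ℝ :=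
  e t - e (t - P) + k ^ 2 * P / 2 * ‖y t‖ ^ 2 -
    k / P * ⟪velocityDefect P y t, positionDefect P z y t⟫

/-- The decrease of `zamesFalb` over a window, in units of the squared saturation level. -/
def descentRate (P β H k : ℝ) : ℝ := k * P * β ^ 2 * H / 131072

variable {σ : ℝ → ℝ} {L : NNReal} {u : ℝ → E} {P β H k t₀ : ℝ} {z y : ℝ → E}

lemma IsExciting.abs_inner_le (hu : IsExciting u P β) (t : ℝ) (v : E) : |⟪u t, v⟫| ≤ ‖v‖ :=
  (abs_real_inner_le_norm _ _).trans (mul_le_of_le_one_left (norm_nonneg v) (hu.norm_le_one t))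

lemma amplitude_nonneg (hH : 0 ≤ H) (t : ℝ) : 0 ≤ amplitude k H z y t :=
  add_nonneg (norm_nonneg _) (mul_nonneg hH (norm_nonneg _))

lemma amplitude_le (hk : 0 ≤ k) (hH : 0 ≤ H) (t : ℝ) :
    amplitude k H z y t ≤ (k ^ 2 + k + H * k ^ 2) * ‖(z t, y t)‖ := by
  have position : ‖z t‖ ≤ ‖(z t, y t)‖ := le_max_left _ _
  have velocity : ‖y t‖ ≤ ‖(z t, y t)‖ := le_max_right _ _
  calc amplitude k H z y t ≤ k ^ 2 * ‖z t‖ + k * ‖y t‖ + H * (k ^ 2 * ‖y t‖) := by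
        rw [amplitude, feedbackState]
        refine add_le_add ((norm_add_le _ _).trans_eq ?_) (le_of_eq ?_) <;>
          simp only [norm_smul, Real.norm_of_nonneg, hk, sq_nonneg]
    _ ≤ k ^ 2 * ‖(z t, y t)‖ + k * ‖(z t, y t)‖ + H * (k ^ 2 * ‖(z t, y t)‖) := by gcongr
    _ = (k ^ 2 + k + H * k ^ 2) * ‖(z t, y t)‖ := by ring

namespace IsTrajectory

variable (h : IsTrajectory σ u k t₀ z y)
include h

lemma mono {τ : ℝ} (hτ : t₀ ≤ τ) : IsTrajectory σ u k τ z y :=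
  ⟨fun t ht => h.hasDerivAt_position t (hτ.trans ht),
    fun t ht => h.hasDerivAt_velocity t (hτ.trans ht)⟩

lemma hasDerivAt_feedbackState {t : ℝ} (ht : t₀ ≤ t) :
    HasDerivAt (feedbackState k z y)
      (k ^ 2 • y t + k • -(σ (output u k z y t) • u t)) t :=
  ((h.hasDerivAt_position t ht).const_smul _).add ((h.hasDerivAt_velocity t ht).const_smul _)

lemma continuousOn_feedbackState : ContinuousOn (feedbackState k z y) (Set.Ici t₀) :=
  fun _ ht => (h.hasDerivAt_feedbackState ht).continuousAt.continuousWithinAt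

lemma continuousOn_output (hu : Continuous u) : ContinuousOn (output u k z y) (Set.Ici t₀) :=
  hu.continuousOn.inner h.continuousOn_feedbackState

end IsTrajectory

lemma IsConcaveFeedback.abs_output_le (hσ : IsConcaveFeedback σ L) (hu : IsExciting u P β)
    (t : ℝ) : |σ (output u k z y t)| ≤ L * ‖feedbackState k z y t‖ :=
  (hσ.abs_le_mul_abs _).trans (by gcongr; exact hu.abs_inner_le t _)

lemma IsExciting.norm_neg_smul_le (hu : IsExciting u P β) (c t : ℝ) : ‖-(c • u t)‖ ≤ |c| := by
  rw [norm_neg, norm_smul, Real.norm_eq_abs]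
  exact mul_le_of_le_one_right (abs_nonneg c) (hu.norm_le_one t)

lemma output_sub_output_sub_period (hu : Function.Periodic u P) (t : ℝ) :
    output u k z y t - output u k z y (t - P) =
      k ^ 2 * (⟪u t, positionDefect P z y t⟫ + P * ⟪u t, y t⟫) +
        k * ⟪u t, velocityDefect P y t⟫ := by
  simp only [output, hu.sub_eq, feedbackState, positionDefect, velocityDefect, inner_sub_right,
    inner_add_right, real_inner_smul_right]
  ring

lemma IsExciting.le_integral_inner_sq (hu : IsExciting u P β) (v : E) (t : ℝ) :
    β * P * ‖v‖ ^ 2 ≤ ∫ r in (t - P)..t, ⟪u r, v⟫ ^ 2 := by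
  have hper : Function.Periodic (fun r => ⟪u r, v⟫ ^ 2) P := fun r => by
    simp only [hu.periodic r]
  have shift := hper.intervalIntegral_add_eq 0 (t - P)
  rw [zero_add, sub_add_cancel] at shift
  exact shift ▸ hu.le_integral_sq v

lemma IsExciting.le_integral_inner_sq_div_sub (hu : IsExciting u P β) (v : E) (t : ℝ) {c : ℝ}
    (hc : 0 ≤ c) (d : ℝ) :
    P * (β * ‖v‖ ^ 2 / c - d) ≤ ∫ r in (t - P)..t, (⟪u r, v⟫ ^ 2 / c - d) := by
  have hinner : Continuous fun r => ⟪u r, v⟫ ^ 2 / c :=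
    ((hu.continuous.inner continuous_const).pow 2).div_const c
  rw [intervalIntegral.integral_sub (hinner.intervalIntegrable _ _) (by simp),
    intervalIntegral.integral_div, intervalIntegral.integral_const, sub_sub_cancel, smul_eq_mul,
    mul_sub]
  gcongr
  calc P * (β * ‖v‖ ^ 2 / c) = β * P * ‖v‖ ^ 2 / c := by ring
    _ ≤ (∫ r in (t - P)..t, ⟪u r, v⟫ ^ 2) / c := by
      gcongr
      exact hu.le_integral_inner_sq v t

lemma IsTuned.window_pos (hk : IsTuned L P β H k) (hu : IsExciting u P β) : 0 < H :=
  pos_of_mul_pos_right ((mul_pos (by norm_num) hu.period_pos).trans_le hk.period_le)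
    hu.level_pos.le

lemma IsTuned.velocityGain_pos (hk : IsTuned L P β H k) (hu : IsExciting u P β) :
    0 < velocityGain L H k := by
  have hk0 := hk.gain_pos
  have hH := hk.window_pos hu
  rw [velocityGain]
  positivity

lemma IsTuned.stateGain_pos (hk : IsTuned L P β H k) (hu : IsExciting u P β) :
    0 < stateGain L H k := by
  have hk0 := hk.gain_pos
  have hgain := hk.velocityGain_pos hu
  rw [stateGain]
  positivity

lemma IsTuned.descentRate_pos (hk : IsTuned L P β H k) (hu : IsExciting u P β) :
    0 < descentRate P β H k := by
  have hk0 := hk.gain_pos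
  have hH := hk.window_pos hu
  have hP := hu.period_pos
  have hβ := hu.level_pos
  rw [descentRate]
  positivity

lemma IsTuned.period_le_div (hk : IsTuned L P β H k) (hu : IsExciting u P β) : P ≤ H / 16 := by
  have := mul_le_of_le_one_left (hk.window_pos hu).le hu.level_le_one
  linarith [hk.period_le, hu.period_pos]

namespace IsTrajectory

variable (hσ : IsConcaveFeedback σ L) (hu : IsExciting u P β) (h : IsTrajectory σ u k t₀ z y)

section Prediction

variable {m : ℝ} (hm : ∀ t ∈ Set.Icc t₀ (t₀ + H), ‖feedbackState k z y t‖ ≤ m)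
include hσ hu h hm

lemma norm_velocity_sub_le_of_le {t : ℝ} (ht : t ∈ Set.Icc t₀ (t₀ + H)) :
    ‖y t - y t₀‖ ≤ L * m * H := by
  have hm0 : 0 ≤ m := (norm_nonneg _).trans (hm t ht)
  calc ‖y t - y t₀‖ ≤ L * m * (t - t₀) :=
        norm_image_sub_le_of_norm_deriv_le_segment'
          (fun r hr => (h.hasDerivAt_velocity r hr.1).hasDerivWithinAt)
          (fun r hr => (hu.norm_neg_smul_le _ r).trans <| (hσ.abs_output_le hu r).trans <| by
            gcongr; exact hm r (Set.Ico_subset_Icc_self hr)) t ht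
    _ ≤ L * m * H := by gcongr; linarith [ht.2]

lemma norm_feedbackState_sub_affine_le_of_le (hk : 0 ≤ k) {t : ℝ}
    (ht : t ∈ Set.Icc t₀ (t₀ + H)) :
    ‖feedbackState k z y t - (feedbackState k z y t₀ + (t - t₀) • k ^ 2 • y t₀)‖ ≤
      driftGain L H k * m := by
  have hm0 : 0 ≤ m := (norm_nonneg _).trans (hm t ht)
  have hH : 0 ≤ H := by linarith [ht.1, ht.2]
  have hderiv (r : ℝ) (hr : t₀ ≤ r) : HasDerivAt
      (fun r => feedbackState k z y r - (r - t₀) • k ^ 2 • y t₀)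
      (k ^ 2 • (y r - y t₀) + k • -(σ (output u k z y r) • u r)) r := by
    refine ((h.hasDerivAt_feedbackState hr).sub
      (((hasDerivAt_id r).sub_const t₀).smul_const (k ^ 2 • y t₀))).congr_deriv ?_
    module
  have hbound (r : ℝ) (hr : r ∈ Set.Icc t₀ (t₀ + H)) :
      ‖k ^ 2 • (y r - y t₀) + k • -(σ (output u k z y r) • u r)‖ ≤
        k ^ 2 * (L * m * H) + k * (L * m) := by
    refine (norm_add_le _ _).trans ?_
    rw [norm_smul, norm_smul, Real.norm_of_nonneg (sq_nonneg k), Real.norm_of_nonneg hk]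
    have input := (hu.norm_neg_smul_le _ r).trans ((hσ.abs_output_le hu r).trans
      (mul_le_mul_of_nonneg_left (hm r hr) L.coe_nonneg))
    have velocity := norm_velocity_sub_le_of_le hσ hu h hm hr
    gcongr
  calc ‖feedbackState k z y t - (feedbackState k z y t₀ + (t - t₀) • k ^ 2 • y t₀)‖
      = ‖feedbackState k z y t - (t - t₀) • k ^ 2 • y t₀ -
          (feedbackState k z y t₀ - (t₀ - t₀) • k ^ 2 • y t₀)‖ := by congr 1; module
    _ ≤ (k ^ 2 * (L * m * H) + k * (L * m)) * (t - t₀) :=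
      norm_image_sub_le_of_norm_deriv_le_segment' (fun r hr => (hderiv r hr.1).hasDerivWithinAt)
        (fun r hr => hbound r (Set.Ico_subset_Icc_self hr)) t ht
    _ ≤ (k ^ 2 * (L * m * H) + k * (L * m)) * H := by gcongr; linarith [ht.2]
    _ = driftGain L H k * m := by rw [driftGain]; ring

end Prediction

section Window

variable (hk : IsTuned L P β H k)
include hσ hu h hk

/- At a maximum `m` of `‖feedbackState‖` over the window, the prediction gives
`m ≤ amplitude + m / 2`. -/
lemma norm_feedbackState_le {t : ℝ} (ht : t ∈ Set.Icc t₀ (t₀ + H)) :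
    ‖feedbackState k z y t‖ ≤ 2 * amplitude k H z y t₀ := by
  obtain ⟨s, hs, hmax⟩ : ∃ s ∈ Set.Icc t₀ (t₀ + H), ∀ r ∈ Set.Icc t₀ (t₀ + H),
      ‖feedbackState k z y r‖ ≤ ‖feedbackState k z y s‖ :=
    isCompact_Icc.exists_isMaxOn ⟨t, ht⟩
      (h.continuousOn_feedbackState.mono Set.Icc_subset_Ici_self).norm
  have hdrift : driftGain L H k ≤ 1 / 2 := by linarith [hk.driftGain_le, hu.level_le_one]
  have predicted := norm_feedbackState_sub_affine_le_of_le hσ hu h hmax hk.gain_pos.le hs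
  have affine : ‖feedbackState k z y t₀ + (s - t₀) • k ^ 2 • y t₀‖ ≤ amplitude k H z y t₀ := by
    refine (norm_add_le _ _).trans ?_
    rw [amplitude, norm_smul, Real.norm_of_nonneg (sub_nonneg.2 hs.1)]
    gcongr
    linarith [hs.2]
  have triangle := norm_le_norm_add_norm_sub' (feedbackState k z y s)
    (feedbackState k z y t₀ + (s - t₀) • k ^ 2 • y t₀)
  have := mul_le_mul_of_nonneg_right hdrift (norm_nonneg (feedbackState k z y s))
  linarith [hmax t ht]

lemma norm_feedbackState_sub_affine_le {t : ℝ} (ht : t ∈ Set.Icc t₀ (t₀ + H)) :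
    ‖feedbackState k z y t - (feedbackState k z y t₀ + (t - t₀) • k ^ 2 • y t₀)‖ ≤
      2 * driftGain L H k * amplitude k H z y t₀ := by
  rw [mul_comm 2, mul_assoc]
  exact norm_feedbackState_sub_affine_le_of_le hσ hu h
    (fun _ hr => norm_feedbackState_le hσ hu h hk hr) hk.gain_pos.le ht

lemma norm_velocity_le {t : ℝ} (ht : t ∈ Set.Icc t₀ (t₀ + H)) :
    ‖y t‖ ≤ velocityGain L H k * amplitude k H z y t₀ := by
  have hk0 := hk.gain_pos
  have hH := hk.window_pos hu
  have initial : ‖y t₀‖ ≤ 1 / (k ^ 2 * H) * amplitude k H z y t₀ := by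
    rw [one_div_mul_eq_div, le_div_iff₀ (by positivity), amplitude, norm_smul,
      Real.norm_of_nonneg (sq_nonneg k)]
    linarith [norm_nonneg (feedbackState k z y t₀)]
  have variation := norm_velocity_sub_le_of_le hσ hu h
    (fun _ hr => norm_feedbackState_le hσ hu h hk hr) ht
  rw [velocityGain]
  linarith [norm_le_norm_add_norm_sub' (y t) (y t₀)]

lemma norm_state_le {t : ℝ} (ht : t ∈ Set.Icc t₀ (t₀ + H)) :
    ‖(z t, y t)‖ ≤ stateGain L H k * amplitude k H z y t₀ := by
  have hk0 := hk.gain_pos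
  have hamp : 0 ≤ amplitude k H z y t₀ := amplitude_nonneg (hk.window_pos hu).le t₀
  have hgain := hk.velocityGain_pos hu
  have velocity := norm_velocity_le hσ hu h hk ht
  have position : ‖z t‖ ≤ (2 + k * velocityGain L H k) / k ^ 2 * amplitude k H z y t₀ := by
    rw [div_mul_eq_mul_div, le_div_iff₀ (by positivity)]
    calc ‖z t‖ * k ^ 2 = ‖feedbackState k z y t - k • y t‖ := by
          rw [feedbackState, add_sub_cancel_right, norm_smul, Real.norm_of_nonneg (sq_nonneg k),
            mul_comm]
      _ ≤ 2 * amplitude k H z y t₀ + k * (velocityGain L H k * amplitude k H z y t₀) := by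
          refine (norm_sub_le _ _).trans ?_
          rw [norm_smul, Real.norm_of_nonneg hk0.le]
          gcongr
          exact norm_feedbackState_le hσ hu h hk ht
      _ = (2 + k * velocityGain L H k) * amplitude k H z y t₀ := by ring
  rw [stateGain, add_mul]
  exact max_le (position.trans (le_add_of_nonneg_left (by positivity)))
    (velocity.trans (le_add_of_nonneg_right (by positivity)))

lemma abs_output_le {t : ℝ} (ht : t ∈ Set.Icc t₀ (t₀ + H)) :
    |σ (output u k z y t)| ≤ σ (2 * amplitude k H z y t₀) :=
  hσ.abs_le_map ((hu.abs_inner_le t _).trans (norm_feedbackState_le hσ hu h hk ht))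

end Window

section Defects

include hu h

lemma hasDerivAt_velocityDefect {t : ℝ} (ht : t₀ + P ≤ t) :
    HasDerivAt (velocityDefect P y)
      (-((σ (output u k z y t) - σ (output u k z y (t - P))) • u t)) t := by
  have ht' : t₀ ≤ t - P := le_sub_iff_add_le.2 ht
  refine ((h.hasDerivAt_velocity t (ht'.trans (sub_le_self t hu.period_pos.le))).sub
    ((h.hasDerivAt_velocity (t - P) ht').comp_sub_const t P)).congr_deriv ?_
  rw [hu.periodic.sub_eq]
  module

lemma hasDerivAt_positionDefect {t : ℝ} (ht : t₀ + P ≤ t) :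
    HasDerivAt (positionDefect P z y)
      (velocityDefect P y t + (P * σ (output u k z y t)) • u t) t := by
  have ht' : t₀ ≤ t - P := le_sub_iff_add_le.2 ht
  have ht₀ : t₀ ≤ t := ht'.trans (sub_le_self t hu.period_pos.le)
  refine (((h.hasDerivAt_position t ht₀).sub
    ((h.hasDerivAt_position (t - P) ht').comp_sub_const t P)).sub
    ((h.hasDerivAt_velocity t ht₀).const_smul P)).congr_deriv ?_
  rw [velocityDefect]
  module

include hσ

lemma continuousOn_control : ContinuousOn (fun t => σ (output u k z y t)) (Set.Ici t₀) :=
  hσ.lipschitz.continuous.comp_continuousOn (h.continuousOn_output hu.continuous)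

lemma continuousOn_control_Icc {t : ℝ} (ht : t₀ + P ≤ t) :
    ContinuousOn (fun r => σ (output u k z y r)) (Set.Icc (t - P) t) :=
  (continuousOn_control hσ hu h).mono fun _ hr => (le_sub_iff_add_le.2 ht).trans hr.1

lemma norm_velocityDefect_le {t : ℝ} (ht : t₀ + P ≤ t) :
    ‖velocityDefect P y t‖ ≤ ∫ r in (t - P)..t, |σ (output u k z y r)| :=
  norm_sub_le_integral_of_hasDerivAt (sub_le_self t hu.period_pos.le)
    (fun r hr => h.hasDerivAt_velocity r ((le_sub_iff_add_le.2 ht).trans hr.1))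
    (continuousOn_control_Icc hσ hu h ht).abs fun r _ => hu.norm_neg_smul_le _ r

lemma norm_positionDefect_le {t : ℝ} (ht : t₀ + P ≤ t) :
    ‖positionDefect P z y t‖ ≤ P * ∫ r in (t - P)..t, |σ (output u k z y r)| := by
  have hderiv (r : ℝ) (hr : t₀ ≤ r) : HasDerivAt (fun r => z r - (r - (t - P)) • y r)
      (-((r - (t - P)) • -(σ (output u k z y r) • u r))) r := by
    refine ((h.hasDerivAt_position r hr).sub
      (((hasDerivAt_id r).sub_const (t - P)).smul (h.hasDerivAt_velocity r hr))).congr_deriv ?_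
    simp only [id_eq]
    module
  calc ‖positionDefect P z y t‖
      = ‖z t - (t - (t - P)) • y t - (z (t - P) - (t - P - (t - P)) • y (t - P))‖ := by
        rw [positionDefect]; congr 1; module
    _ ≤ ∫ r in (t - P)..t, P * |σ (output u k z y r)| := by
        refine norm_sub_le_integral_of_hasDerivAt (sub_le_self t hu.period_pos.le)
          (fun r hr => hderiv r ((le_sub_iff_add_le.2 ht).trans hr.1))
          ((continuousOn_control_Icc hσ hu h ht).abs.const_mul P) fun r hr => ?_
        rw [norm_neg, norm_smul, Real.norm_of_nonneg (sub_nonneg.2 hr.1)]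
        gcongr
        · exact hu.period_pos.le
        · linarith [hr.2]
        · exact hu.norm_neg_smul_le _ r
    _ = P * ∫ r in (t - P)..t, |σ (output u k z y r)| :=
        intervalIntegral.integral_const_mul _ _

lemma norm_velocityDefect_mul_norm_positionDefect_le {t : ℝ} (ht : t₀ + P ≤ t) :
    ‖velocityDefect P y t‖ * ‖positionDefect P z y t‖ ≤
      P ^ 2 * ∫ r in (t - P)..t, σ (output u k z y r) ^ 2 := by
  have hP := hu.period_pos
  have hDle := norm_velocityDefect_le hσ hu h ht
  have cauchy_schwarz := sq_integral_le_mul_integral_sq (sub_le_self t hP.le)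
    (continuousOn_control_Icc hσ hu h ht).abs
  simp only [sq_abs, sub_sub_cancel] at cauchy_schwarz
  calc ‖velocityDefect P y t‖ * ‖positionDefect P z y t‖
      ≤ (∫ r in (t - P)..t, |σ (output u k z y r)|) *
          (P * ∫ r in (t - P)..t, |σ (output u k z y r)|) :=
        mul_le_mul hDle (norm_positionDefect_le hσ hu h ht) (norm_nonneg _)
          ((norm_nonneg _).trans hDle)
    _ = P * (∫ r in (t - P)..t, |σ (output u k z y r)|) ^ 2 := by ring
    _ ≤ P * (P * ∫ r in (t - P)..t, σ (output u k z y r) ^ 2) := by gcongr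
    _ = P ^ 2 * ∫ r in (t - P)..t, σ (output u k z y r) ^ 2 := by ring

lemma continuousOn_primitive_output :
    ContinuousOn (fun t => primitive σ (output u k z y t)) (Set.Ici t₀) :=
  hσ.continuous_primitive.comp_continuousOn (h.continuousOn_output hu.continuous)

lemma integral_control_mul_inner_le {t : ℝ} (ht : t₀ + P ≤ t) (v : E) :
    ∫ r in (t - P)..t, σ (output u k z y r) * ⟪u r, v⟫ ≤ ‖velocityDefect P y t‖ * ‖v‖ := by
  have hle : t - P ≤ t := sub_le_self t hu.period_pos.le
  have hderiv (r : ℝ) (hr : r ∈ Set.uIcc (t - P) t) :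
      HasDerivAt (fun r => -⟪y r, v⟫) (σ (output u k z y r) * ⟪u r, v⟫) r := by
    rw [Set.uIcc_of_le hle] at hr
    refine ((h.hasDerivAt_velocity r ((le_sub_iff_add_le.2 ht).trans hr.1)).inner ℝ
      (hasDerivAt_const r v)).neg.congr_deriv ?_
    rw [inner_zero_right, inner_neg_left, real_inner_smul_left]
    ring
  rw [integral_eq_sub_of_hasDerivAt hderiv
    (((continuousOn_control_Icc hσ hu h ht).mul
      (hu.continuous.inner continuous_const).continuousOn).intervalIntegrable_of_Icc hle)]
  calc -⟪y t, v⟫ - -⟪y (t - P), v⟫ = -⟪velocityDefect P y t, v⟫ := by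
        rw [velocityDefect, inner_sub_left]; ring
    _ ≤ |⟪velocityDefect P y t, v⟫| := neg_le_abs _
    _ ≤ ‖velocityDefect P y t‖ * ‖v‖ := abs_real_inner_le_norm _ _

end Defects

section Excitation

variable (hk : IsTuned L P β H k)
include hσ hu h hk

lemma integral_abs_control_le {t : ℝ} (ht : t ∈ Set.Icc (t₀ + P) (t₀ + H)) :
    ∫ r in (t - P)..t, |σ (output u k z y r)| ≤ P * σ (2 * amplitude k H z y t₀) := by
  have hle : t - P ≤ t := sub_le_self t hu.period_pos.le
  calc ∫ r in (t - P)..t, |σ (output u k z y r)|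
      ≤ ∫ _ in (t - P)..t, σ (2 * amplitude k H z y t₀) :=
        integral_mono_on hle
          ((continuousOn_control_Icc hσ hu h ht.1).abs.intervalIntegrable_of_Icc hle) (by simp)
          fun r hr => abs_output_le hσ hu h hk
            ⟨(le_sub_iff_add_le.2 ht.1).trans hr.1, hr.2.trans ht.2⟩
    _ = P * σ (2 * amplitude k H z y t₀) := by simp

lemma abs_output_sub_inner_le {τ t : ℝ} (hτ : t₀ ≤ τ) (ht : t ∈ Set.Icc τ (τ + P))
    (htH : t ≤ t₀ + H) :
    |output u k z y t - ⟪u t, feedbackState k z y t₀ + (τ - t₀) • k ^ 2 • y t₀⟫| ≤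
      β / 1024 * amplitude k H z y t₀ := by
  have hH := hk.window_pos hu
  have hamp : 0 ≤ amplitude k H z y t₀ := amplitude_nonneg hH.le t₀
  have drift : (t - τ) * ‖k ^ 2 • y t₀‖ ≤ β / 2048 * amplitude k H z y t₀ :=
    calc (t - τ) * ‖k ^ 2 • y t₀‖ ≤ β * H / 2048 * ‖k ^ 2 • y t₀‖ := by
          gcongr; linarith [ht.2, hk.period_le]
      _ ≤ β / 2048 * amplitude k H z y t₀ := by
          rw [amplitude]
          have := mul_nonneg hu.level_pos.le (norm_nonneg (feedbackState k z y t₀))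
          linarith
  have predicted := norm_feedbackState_sub_affine_le hσ hu h hk ⟨hτ.trans ht.1, htH⟩
  have hκ := mul_le_mul_of_nonneg_right hk.driftGain_le hamp
  rw [output, ← inner_sub_right]
  calc _ ≤ ‖feedbackState k z y t - (feedbackState k z y t₀ + (τ - t₀) • k ^ 2 • y t₀)‖ :=
        hu.abs_inner_le t _
    _ = ‖feedbackState k z y t - (feedbackState k z y t₀ + (t - t₀) • k ^ 2 • y t₀) +
          (t - τ) • k ^ 2 • y t₀‖ := by congr 1; module
    _ ≤ 2 * driftGain L H k * amplitude k H z y t₀ + (t - τ) * ‖k ^ 2 • y t₀‖ := by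
        refine (norm_add_le _ _).trans (add_le_add predicted ?_)
        rw [norm_smul, Real.norm_of_nonneg (sub_nonneg.2 ht.1)]
    _ ≤ β / 1024 * amplitude k H z y t₀ := by linarith

lemma map_mul_le_integral_control_mul_inner {t : ℝ} (ht : t ∈ Set.Icc (t₀ + P) (t₀ + H))
    (hpos : 0 < amplitude k H z y t₀) :
    let v := feedbackState k z y t₀ + (t - P - t₀) • k ^ 2 • y t₀
    σ (2 * amplitude k H z y t₀) * (β * P *
        (‖v‖ ^ 2 / (4 * amplitude k H z y t₀) - amplitude k H z y t₀ / 512)) ≤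
      ∫ r in (t - P)..t, σ (output u k z y r) * ⟪u r, v⟫ := by
  intro v
  set ρ := amplitude k H z y t₀
  have hP := hu.period_pos
  have hle : t - P ≤ t := sub_le_self t hP.le
  have hτ : t₀ ≤ t - P := le_sub_iff_add_le.2 ht.1
  have hinner : Continuous fun r => ⟪u r, v⟫ := hu.continuous.inner continuous_const
  have hS : 0 ≤ σ (2 * ρ) := hσ.map_nonneg (by positivity)
  have pointwise : ∀ r ∈ Set.Icc (t - P) t,
      σ (2 * ρ) * (⟪u r, v⟫ ^ 2 / (2 * (2 * ρ)) - 2 * (β / 1024 * ρ)) ≤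
        σ (output u k z y r) * ⟪u r, v⟫ := fun r hr =>
    hσ.map_mul_sub_le_map_mul (by positivity)
      ((hu.abs_inner_le r _).trans
        (norm_feedbackState_le hσ hu h hk ⟨hτ.trans hr.1, hr.2.trans ht.2⟩))
      (abs_output_sub_inner_le hσ hu h hk hτ ⟨hr.1, by linarith [hr.2]⟩ (hr.2.trans ht.2))
      (by nlinarith [hu.level_le_one])
  calc σ (2 * ρ) * (β * P * (‖v‖ ^ 2 / (4 * ρ) - ρ / 512))
      = σ (2 * ρ) * (P * (β * ‖v‖ ^ 2 / (2 * (2 * ρ)) - 2 * (β / 1024 * ρ))) := by ring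
    _ ≤ σ (2 * ρ) *
          ∫ r in (t - P)..t, (⟪u r, v⟫ ^ 2 / (2 * (2 * ρ)) - 2 * (β / 1024 * ρ)) := by
        gcongr
        exact hu.le_integral_inner_sq_div_sub v t (by positivity) _
    _ = ∫ r in (t - P)..t,
          σ (2 * ρ) * (⟪u r, v⟫ ^ 2 / (2 * (2 * ρ)) - 2 * (β / 1024 * ρ)) :=
        (intervalIntegral.integral_const_mul _ _).symm
    _ ≤ ∫ r in (t - P)..t, σ (output u k z y r) * ⟪u r, v⟫ :=
        integral_mono_on hle (Continuous.intervalIntegrable (by fun_prop) _ _)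
          (((continuousOn_control_Icc hσ hu h ht.1).mul
            hinner.continuousOn).intervalIntegrable_of_Icc hle) pointwise

lemma le_norm_velocityDefect {t : ℝ} (ht : t ∈ Set.Icc (t₀ + P) (t₀ + H))
    (hv : amplitude k H z y t₀ / 8 ≤
      ‖feedbackState k z y t₀ + (t - P - t₀) • k ^ 2 • y t₀‖) :
    β * P / 64 * σ (2 * amplitude k H z y t₀) ≤ ‖velocityDefect P y t‖ := by
  have hH := hk.window_pos hu
  have hamp : 0 ≤ amplitude k H z y t₀ := amplitude_nonneg hH.le t₀
  rcases hamp.eq_or_lt with h0 | hpos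
  · simp [← h0, hσ.map_zero]
  have lower := map_mul_le_integral_control_mul_inner hσ hu h hk ht hpos
  dsimp only at lower
  set v := feedbackState k z y t₀ + (t - P - t₀) • k ^ 2 • y t₀
  set ρ := amplitude k H z y t₀
  have hvpos : 0 < ‖v‖ := (by positivity : 0 < ρ / 8).trans_le hv
  have quadratic : ‖v‖ / 64 ≤ ‖v‖ ^ 2 / (4 * ρ) - ρ / 512 := by
    have : ‖v‖ / 32 ≤ ‖v‖ ^ 2 / (4 * ρ) := by
      rw [le_div_iff₀ (by positivity)]; nlinarith
    linarith
  have hβP := mul_pos hu.level_pos hu.period_pos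
  refine le_of_mul_le_mul_right ?_ hvpos
  calc β * P / 64 * σ (2 * ρ) * ‖v‖ = σ (2 * ρ) * (β * P * (‖v‖ / 64)) := by ring
    _ ≤ σ (2 * ρ) * (β * P * (‖v‖ ^ 2 / (4 * ρ) - ρ / 512)) := by
        have := hσ.map_nonneg (by positivity : 0 ≤ 2 * ρ)
        gcongr
    _ ≤ ∫ r in (t - P)..t, σ (output u k z y r) * ⟪u r, v⟫ := lower
    _ ≤ ‖velocityDefect P y t‖ * ‖v‖ := integral_control_mul_inner_le hσ hu h ht.1 v

end Excitation

section Functional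

variable {e : ℝ → ℝ}
  (he : ∀ t, t₀ ≤ t → HasDerivAt e (primitive σ (output u k z y t)) t)
include hσ hu h he

lemma exists_hasDerivAt_zamesFalb_le {t : ℝ} (ht : t₀ + P ≤ t) :
    ∃ V', HasDerivAt (zamesFalb P k e z y) V' t ∧
      V' ≤ -(k / P) * ‖velocityDefect P y t‖ ^ 2 +
        k ^ 2 * |σ (output u k z y t)| * ‖positionDefect P z y t‖ +
        L * k ^ 2 / (2 * P ^ 2) * ‖positionDefect P z y t‖ ^ 2 := by
  have hP := hu.period_pos
  have hL : (0 : ℝ) < L := hσ.lipschitz_pos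
  have ht' : t₀ ≤ t - P := le_sub_iff_add_le.2 ht
  have ht₀ : t₀ ≤ t := ht'.trans (sub_le_self t hP.le)
  refine ⟨_, (((he t ht₀).sub ((he (t - P) ht').comp_sub_const t P)).add
    ((h.hasDerivAt_velocity t ht₀).norm_sq.const_mul (k ^ 2 * P / 2))).sub
    (((hasDerivAt_velocityDefect hu h ht).inner ℝ
      (hasDerivAt_positionDefect hu h ht)).const_mul (k / P)), ?_⟩
  have storage := hσ.primitive_sub_primitive_le (output u k z y t) (output u k z y (t - P))
  rw [output_sub_output_sub_period hu.periodic] at storage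
  have hRle := hu.abs_inner_le t (positionDefect P z y t)
  simp only [inner_add_right, inner_neg_right, inner_neg_left, real_inner_smul_right,
    real_inner_smul_left, real_inner_self_eq_norm_sq, real_inner_comm (u t)]
  set D := velocityDefect P y t
  set R := positionDefect P z y t
  set s := σ (output u k z y t)
  set Δ := s - σ (output u k z y (t - P))
  have young : k / P * (Δ * ⟪u t, R⟫) ≤ Δ ^ 2 / (2 * L) + L * k ^ 2 / (2 * P ^ 2) * ‖R‖ ^ 2 :=
    calc k / P * (Δ * ⟪u t, R⟫)
        = Δ ^ 2 / (2 * L) + L * k ^ 2 / (2 * P ^ 2) * |⟪u t, R⟫| ^ 2 -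
            (Δ - L * (k / P) * ⟪u t, R⟫) ^ 2 / (2 * L) := by rw [sq_abs]; field_simp; ring
      _ ≤ Δ ^ 2 / (2 * L) + L * k ^ 2 / (2 * P ^ 2) * ‖R‖ ^ 2 := by
        refine (sub_le_self _ (by positivity)).trans ?_
        gcongr
  have cross : k ^ 2 * (s * ⟪u t, R⟫) ≤ k ^ 2 * |s| * ‖R‖ := by
    rw [mul_assoc]
    refine mul_le_mul_of_nonneg_left ((le_abs_self _).trans ?_) (sq_nonneg k)
    rw [abs_mul]
    gcongr
  have cancel : k / P * (P * s * ⟪u t, D⟫) = k * s * ⟪u t, D⟫ := by field_simp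
  linarith

lemma sub_eq_integral_primitive {t : ℝ} (ht : t₀ + P ≤ t) :
    e t - e (t - P) = ∫ r in (t - P)..t, primitive σ (output u k z y r) := by
  have hle : t - P ≤ t := sub_le_self t hu.period_pos.le
  have hIci : Set.Icc (t - P) t ⊆ Set.Ici t₀ := fun _ hr => (le_sub_iff_add_le.2 ht).trans hr.1
  exact (integral_eq_sub_of_hasDerivAt (fun r hr => he r (hIci (Set.uIcc_of_le hle ▸ hr)))
    (((continuousOn_primitive_output hσ hu h).mono hIci).intervalIntegrable_of_Icc hle)).symm

variable (hk : IsTuned L P β H k)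
include hk

lemma mul_abs_inner_defect_le {t : ℝ} (ht : t₀ + P ≤ t) :
    k / P * |⟪velocityDefect P y t, positionDefect P z y t⟫| ≤ e t - e (t - P) := by
  have hP := hu.period_pos
  have hk0 := hk.gain_pos
  have hle : t - P ≤ t := sub_le_self t hP.le
  have energy_integrable := ((continuousOn_primitive_output hσ hu h).mono
    fun r (hr : r ∈ Set.Icc (t - P) t) => (le_sub_iff_add_le.2 ht).trans hr.1)
      |>.intervalIntegrable_of_Icc (μ := volume) hle
  have input_le_energy :
      ∫ r in (t - P)..t, σ (output u k z y r) ^ 2 ≤ 2 * L * (e t - e (t - P)) := by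
    rw [sub_eq_integral_primitive hσ hu h he ht, ← intervalIntegral.integral_const_mul]
    exact integral_mono_on hle
      ((continuousOn_control_Icc hσ hu h ht).pow 2 |>.intervalIntegrable_of_Icc hle)
      (energy_integrable.const_mul _) fun r _ => hσ.sq_le_mul_primitive _
  have energy_nonneg : 0 ≤ e t - e (t - P) :=
    nonneg_of_mul_nonneg_right
      ((integral_nonneg hle fun r _ => sq_nonneg _).trans input_le_energy)
      (mul_pos two_pos hσ.lipschitz_pos)
  calc k / P * |⟪velocityDefect P y t, positionDefect P z y t⟫|
      ≤ k / P * (P ^ 2 * (2 * L * (e t - e (t - P)))) := by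
        gcongr
        exact (abs_real_inner_le_norm _ _).trans
          ((norm_velocityDefect_mul_norm_positionDefect_le hσ hu h ht).trans (by gcongr))
    _ = 2 * L * P * k * (e t - e (t - P)) := by field_simp
    _ ≤ e t - e (t - P) := mul_le_of_le_one_left energy_nonneg hk.storage_le

lemma zamesFalb_nonneg {t : ℝ} (ht : t₀ + P ≤ t) : 0 ≤ zamesFalb P k e z y t := by
  have cross := (mul_le_mul_of_nonneg_left (le_abs_self _)
    (div_pos hk.gain_pos hu.period_pos).le).trans (mul_abs_inner_defect_le hσ hu h he hk ht)
  have kinetic : 0 ≤ k ^ 2 * P / 2 * ‖y t‖ ^ 2 :=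
    mul_nonneg (by nlinarith [hu.period_pos, sq_nonneg k]) (sq_nonneg _)
  rw [zamesFalb]
  linarith

lemma zamesFalb_le :
    zamesFalb P k e z y (t₀ + P) ≤ storageGain L P H k * amplitude k H z y t₀ ^ 2 := by
  have hP := hu.period_pos
  have hH := hk.window_pos hu
  have ht : t₀ + P ∈ Set.Icc t₀ (t₀ + H) :=
    ⟨by linarith, by linarith [hk.period_le_div hu]⟩
  have energy : e (t₀ + P) - e (t₀ + P - P) ≤ 2 * L * P * amplitude k H z y t₀ ^ 2 := by
    have pointwise (r : ℝ) (hr : r ∈ Set.Icc (t₀ + P - P) (t₀ + P)) :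
        primitive σ (output u k z y r) ≤ L / 2 * (2 * amplitude k H z y t₀) ^ 2 := by
      rw [add_sub_cancel_right] at hr
      refine (hσ.primitive_le_sq _).trans (mul_le_mul_of_nonneg_left ?_ (by positivity))
      exact sq_le_sq.2 <| ((hu.abs_inner_le r _).trans
        (norm_feedbackState_le hσ hu h hk ⟨hr.1, hr.2.trans ht.2⟩)).trans (le_abs_self _)
    have hle : t₀ + P - P ≤ t₀ + P := sub_le_self _ hP.le
    have integrable := ((continuousOn_primitive_output hσ hu h).mono
      fun r (hr : r ∈ Set.Icc (t₀ + P - P) (t₀ + P)) => (add_sub_cancel_right t₀ P) ▸ hr.1)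
        |>.intervalIntegrable_of_Icc (μ := volume) hle
    rw [sub_eq_integral_primitive hσ hu h he le_rfl]
    refine (integral_mono_on hle integrable (by simp) pointwise).trans_eq ?_
    rw [intervalIntegral.integral_const, sub_sub_cancel, smul_eq_mul]
    ring
  have kinetic : k ^ 2 * P / 2 * ‖y (t₀ + P)‖ ^ 2 ≤
      k ^ 2 * P / 2 * (velocityGain L H k * amplitude k H z y t₀) ^ 2 := by
    gcongr
    exact norm_velocity_le hσ hu h hk ht
  have cross := (mul_le_mul_of_nonneg_left (neg_le_abs _)
    (div_pos hk.gain_pos hP).le).trans (mul_abs_inner_defect_le hσ hu h he hk le_rfl)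
  rw [zamesFalb, storageGain]
  linarith

lemma exists_hasDerivAt_zamesFalb_le_of_mem_window {t : ℝ}
    (ht : t ∈ Set.Icc (t₀ + P) (t₀ + H)) :
    ∃ V', HasDerivAt (zamesFalb P k e z y) V' t ∧
      V' ≤ -(k / P) * ‖velocityDefect P y t‖ ^ 2 +
        k ^ 2 * P ^ 2 * (1 + L / 2) * σ (2 * amplitude k H z y t₀) ^ 2 := by
  have hP := hu.period_pos
  obtain ⟨V', hV', hle⟩ := exists_hasDerivAt_zamesFalb_le hσ hu h he ht.1
  refine ⟨V', hV', hle.trans ?_⟩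
  set S := σ (2 * amplitude k H z y t₀)
  have hsS : |σ (output u k z y t)| ≤ S :=
    abs_output_le hσ hu h hk ⟨by linarith [ht.1], ht.2⟩
  have hRS : ‖positionDefect P z y t‖ ≤ P * (P * S) :=
    (norm_positionDefect_le hσ hu h ht.1).trans
      (mul_le_mul_of_nonneg_left (integral_abs_control_le hσ hu h hk ht) hP.le)
  calc _ ≤ -(k / P) * ‖velocityDefect P y t‖ ^ 2 + k ^ 2 * S * (P * (P * S)) +
          L * k ^ 2 / (2 * P ^ 2) * (P * (P * S)) ^ 2 := by
        have := (abs_nonneg _).trans hsS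
        gcongr
    _ = -(k / P) * ‖velocityDefect P y t‖ ^ 2 + k ^ 2 * P ^ 2 * (1 + L / 2) * S ^ 2 := by
        field_simp
        ring

lemma zamesFalb_sub_le {a b d : ℝ} (ha : t₀ + P ≤ a) (hab : a ≤ b) (hb : b ≤ t₀ + H)
    (hd0 : 0 ≤ d) (hd : ∀ t ∈ Set.Icc a b, d ≤ ‖velocityDefect P y t‖) :
    zamesFalb P k e z y b - zamesFalb P k e z y a ≤
      (k ^ 2 * P ^ 2 * (1 + L / 2) * σ (2 * amplitude k H z y t₀) ^ 2 - k / P * d ^ 2) *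
        (b - a) :=
  sub_le_mul_sub_of_hasDerivAt_le hab fun t ht => by
    obtain ⟨V', hV', hle⟩ := exists_hasDerivAt_zamesFalb_le_of_mem_window hσ hu h he hk
      ⟨ha.trans ht.1, ht.2.trans hb⟩
    refine ⟨V', hV', hle.trans ?_⟩
    have hkP : 0 ≤ k / P := (div_pos hk.gain_pos hu.period_pos).le
    have := mul_le_mul_of_nonneg_left (pow_le_pow_left₀ hd0 (hd t ht) 2) hkP
    linarith

/- On the excited part of the window the decrease is twice `descentRate`; the error terms over the
whole window consume at most half of it. -/
lemma zamesFalb_add_le :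
    zamesFalb P k e z y (t₀ + H) +
        descentRate P β H k * σ (2 * amplitude k H z y t₀) ^ 2 ≤
      zamesFalb P k e z y (t₀ + P) := by
  have hP := hu.period_pos
  have hβ := hu.level_pos
  have hk0 := hk.gain_pos
  have hH := hk.window_pos hu
  have hPH := hk.period_le_div hu
  obtain ⟨c, hc, hlarge⟩ :=
    exists_forall_le_norm_add_smul (feedbackState k z y t₀) (k ^ 2 • y t₀) hH.le
  have hamp : 0 ≤ amplitude k H z y t₀ := amplitude_nonneg hH.le t₀
  have hS : 0 ≤ σ (2 * amplitude k H z y t₀) := hσ.map_nonneg (by positivity)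
  have drift {a b : ℝ} (ha : t₀ + P ≤ a) (hab : a ≤ b) (hb : b ≤ t₀ + H) :=
    zamesFalb_sub_le hσ hu h he hk ha hab hb le_rfl fun t _ => norm_nonneg _
  have before := drift le_rfl (b := t₀ + c + P) (by linarith [hc.1]) (by linarith [hc.2])
  have excited := zamesFalb_sub_le hσ hu h he hk (a := t₀ + c + P) (b := t₀ + c + H / 8)
    (by linarith [hc.1]) (by linarith) (by linarith [hc.2]) (by positivity) fun t ht =>
      le_norm_velocityDefect hσ hu h hk ⟨by linarith [ht.1, hc.1], by linarith [ht.2, hc.2]⟩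
        (hlarge (t - P - t₀) ⟨by linarith [ht.1], by linarith [ht.2]⟩)
  have after := drift (a := t₀ + c + H / 8) (by linarith [hc.1]) (by linarith [hc.2]) le_rfl
  set S := σ (2 * amplitude k H z y t₀)
  have error : k ^ 2 * P ^ 2 * (1 + L / 2) * S ^ 2 * (H - P) ≤ descentRate P β H k * S ^ 2 :=
    calc k ^ 2 * P ^ 2 * (1 + L / 2) * S ^ 2 * (H - P)
        ≤ k ^ 2 * P ^ 2 * (1 + L) * S ^ 2 * H := by
          gcongr
          · linarith
          · exact half_le_self L.coe_nonneg
          · exact sub_le_self H hP.le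
      _ = k * P * (131072 * (k * P * (L + 1))) * H / 131072 * S ^ 2 := by ring
      _ ≤ descentRate P β H k * S ^ 2 := by
          unfold descentRate
          gcongr
          exact hk.error_le
  have gain : 2 * descentRate P β H k * S ^ 2 ≤ k / P * (β * P / 64 * S) ^ 2 * (H / 8 - P) :=
    calc 2 * descentRate P β H k * S ^ 2 = k / P * (β * P / 64 * S) ^ 2 * (H / 16) := by
          unfold descentRate; field_simp; ring
      _ ≤ k / P * (β * P / 64 * S) ^ 2 * (H / 8 - P) := by gcongr; linarith
  linarith

end Functional

section Descent

variable (hk : IsTuned L P β H k)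
include hσ hu h hk

/- The windows `[t₀ + j T, t₀ + j T + H]` with `T = H - P` overlap by one period, so that the
functional at the end of one of them is its value at the start of the next. -/
lemma exists_descent : ∃ V : ℕ → ℝ, (∀ j, 0 ≤ V j) ∧
    V 0 ≤ storageGain L P H k * amplitude k H z y t₀ ^ 2 ∧
    ∀ j, V (j + 1) + descentRate P β H k *
      σ (2 * amplitude k H z y (t₀ + j * (H - P))) ^ 2 ≤ V j := by
  obtain ⟨e, he⟩ := exists_forall_hasDerivAt_of_continuousOn_Ici
    (continuousOn_primitive_output hσ hu h)
  have hT : 0 ≤ H - P := by linarith [hk.period_le_div hu, hu.period_pos]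
  have hτ (j : ℕ) : t₀ ≤ t₀ + j * (H - P) :=
    le_add_of_nonneg_right (mul_nonneg j.cast_nonneg hT)
  refine ⟨fun j => zamesFalb P k e z y (t₀ + j * (H - P) + P), fun j =>
    zamesFalb_nonneg hσ hu h he hk (by gcongr; exact hτ j), ?_, fun j => ?_⟩
  · simpa using zamesFalb_le hσ hu h he hk
  · have descent := zamesFalb_add_le hσ hu (h.mono (hτ j))
      (fun t ht => he t ((hτ j).trans ht)) hk
    rwa [show t₀ + j * (H - P) + H = t₀ + ((j + 1 : ℕ) : ℝ) * (H - P) + P by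
      push_cast; ring] at descent

lemma map_amplitude_sq_le (j : ℕ) :
    descentRate P β H k * σ (2 * amplitude k H z y (t₀ + j * (H - P))) ^ 2 ≤
      storageGain L P H k * amplitude k H z y t₀ ^ 2 := by
  obtain ⟨V, hV, hV0, descent⟩ := exists_descent hσ hu h hk
  have hrate := hk.descentRate_pos hu
  have := Finset.single_le_sum (f := fun j : ℕ =>
      descentRate P β H k * σ (2 * amplitude k H z y (t₀ + j * (H - P))) ^ 2)
    (fun i _ => by positivity) (Finset.self_mem_range_succ j)
  linarith [sum_add_le_of_add_le descent (j + 1), hV (j + 1)]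

lemma tendsto_amplitude :
    Tendsto (fun j : ℕ => amplitude k H z y (t₀ + j * (H - P))) atTop (nhds 0) := by
  obtain ⟨V, hV, -, descent⟩ := exists_descent hσ hu h hk
  have hrate := hk.descentRate_pos hu
  have vanishing := (summable_of_sum_range_le (fun j => by positivity) fun n =>
    (le_add_of_nonneg_right (hV n)).trans (sum_add_le_of_add_le descent n)).tendsto_atTop_zero
  have hamp (t : ℝ) : 0 ≤ amplitude k H z y t := amplitude_nonneg (hk.window_pos hu).le t
  refine tendsto_order.2 ⟨fun a ha => .of_forall fun j => ha.trans_le (hamp _), fun δ hδ => ?_⟩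
  have hpos := hσ.pos (2 * δ) (by positivity)
  filter_upwards [vanishing.eventually_lt_const
    (by positivity : 0 < descentRate P β H k * σ (2 * δ) ^ 2)] with j hj
  exact hσ.lt_of_mul_map_sq_lt hrate hδ.le hj

lemma norm_state_le_floor {t : ℝ} (ht : t₀ ≤ t) :
    ‖(z t, y t)‖ ≤ stateGain L H k *
      amplitude k H z y (t₀ + ⌊(t - t₀) / (H - P)⌋₊ * (H - P)) := by
  have hP := hu.period_pos
  have hT : 0 < H - P := by linarith [hk.period_le_div hu]
  exact norm_state_le hσ hu (h.mono (le_add_of_nonneg_right (by positivity))) hk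
    (mem_Icc_add_floor_mul hT (sub_le_self H hP.le) ht)

theorem tendsto_state : Tendsto (fun t => (z t, y t)) atTop (nhds 0) := by
  have hT : 0 < H - P := by linarith [hk.period_le_div hu, hu.period_pos]
  have floor_atTop : Tendsto (fun t => ⌊(t - t₀) / (H - P)⌋₊) atTop atTop :=
    tendsto_nat_floor_atTop.comp
      ((tendsto_atTop_add_const_right _ (-t₀) tendsto_id).atTop_div_const hT)
  have bound := ((tendsto_amplitude hσ hu h hk).comp floor_atTop).const_mul (stateGain L H k)
  rw [mul_zero] at bound
  exact squeeze_zero_norm' ((eventually_ge_atTop t₀).mono fun t ht =>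
    norm_state_le_floor hσ hu h hk ht) bound

end Descent

theorem exists_forall_norm_state_le (hσ : IsConcaveFeedback σ L) (hu : IsExciting u P β)
    (hk : IsTuned L P β H k) {δ : ℝ} (hδ : 0 < δ) :
    ∃ η > 0, ∀ (t₀ : ℝ) (z y : ℝ → E), IsTrajectory σ u k t₀ z y → ‖(z t₀, y t₀)‖ ≤ η →
      ∀ t, t₀ ≤ t → ‖(z t, y t)‖ ≤ δ := by
  have hk0 := hk.gain_pos
  have hH := hk.window_pos hu
  have hrate := hk.descentRate_pos hu
  have hgain := hk.stateGain_pos hu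
  have hstorage : 0 ≤ storageGain L P H k := by
    have := hu.period_pos
    rw [storageGain]
    positivity
  have hpos := hσ.pos (2 * (δ / stateGain L H k)) (by positivity)
  obtain ⟨η, hη, hsmall⟩ := (eventually_mem_nhdsWithin.and <|
    eventually_lt_of_continuous_of_map_zero
      (f := fun η => storageGain L P H k * ((k ^ 2 + k + H * k ^ 2) * η) ^ 2) (by fun_prop)
      (by simp) (by positivity :
        0 < descentRate P β H k * σ (2 * (δ / stateGain L H k)) ^ 2)).exists
  refine ⟨η, hη, fun t₀ z y h hinit t ht => (norm_state_le_floor hσ hu h hk ht).trans ?_⟩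
  have initial : amplitude k H z y t₀ ≤ (k ^ 2 + k + H * k ^ 2) * η :=
    (amplitude_le hk0.le hH.le t₀).trans (by gcongr)
  have hamp := amplitude_nonneg (k := k) (z := z) (y := y) hH.le t₀
  rw [mul_comm, ← le_div_iff₀ hgain]
  refine (hσ.lt_of_mul_map_sq_lt hrate (by positivity) ?_).le
  calc _ ≤ storageGain L P H k * amplitude k H z y t₀ ^ 2 := map_amplitude_sq_le hσ hu h hk _
    _ ≤ storageGain L P H k * ((k ^ 2 + k + H * k ^ 2) * η) ^ 2 := by gcongr
    _ < _ := hsmall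

end IsTrajectory
end Trajectories

/-! ### The oscillator in its rotating frame -/

section RotatingFrame

/-- The rotation `exp (-iωt)`, which turns the frame of the oscillator into that of a double
integrator. -/
def phaseFactor (ω t : ℝ) : ℂ := Complex.exp ((-(ω * t) : ℝ) * Complex.I)

/-- The components `(x i, x j)` of a plane curve, read as a complex number and seen from the
rotating frame. -/
def rotatingFrame {ι : Type*} (ω : ℝ) (x : ℝ → ι → ℝ) (i j : ι) (t : ℝ) : ℂ :=
  phaseFactor ω t * (x t i + x t j * Complex.I)

/-- The input direction `e₂` seen from the rotating frame. -/
def rotatingInput (ω t : ℝ) : ℂ := phaseFactor ω t * Complex.I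

variable {ω : ℝ}

lemma norm_phaseFactor (ω t : ℝ) : ‖phaseFactor ω t‖ = 1 := Complex.norm_exp_ofReal_mul_I _

lemma phaseFactor_add (ω s t : ℝ) : phaseFactor ω (s + t) = phaseFactor ω t * phaseFactor ω s := by
  rw [phaseFactor, phaseFactor, phaseFactor, ← Complex.exp_add]
  push_cast
  ring_nf

lemma hasDerivAt_phaseFactor (ω t : ℝ) :
    HasDerivAt (phaseFactor ω) (phaseFactor ω t * (-ω * Complex.I)) t := by
  have phase : HasDerivAt (fun t : ℝ => -(ω * t)) (-ω) t := by
    simpa using ((hasDerivAt_id t).const_mul ω).fun_neg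
  refine ((phase.ofReal_comp.mul_const Complex.I).cexp).congr_deriv ?_
  rw [phaseFactor, Complex.ofReal_neg ω]

lemma continuous_phaseFactor (ω : ℝ) : Continuous (phaseFactor ω) := by
  unfold phaseFactor
  fun_prop

lemma inner_phaseFactor_mul (ω t : ℝ) (v w : ℂ) :
    ⟪phaseFactor ω t * v, phaseFactor ω t * w⟫ = ⟪v, w⟫ := by
  rw [Complex.inner, Complex.inner, map_mul, mul_mul_mul_comm, Complex.mul_conj',
    norm_phaseFactor, Complex.ofReal_one, one_pow, one_mul]

lemma inner_sq_add_inner_mul_I_sq (v w : ℂ) :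
    ⟪v, w⟫ ^ 2 + ⟪v * Complex.I, w⟫ ^ 2 = ‖v‖ ^ 2 * ‖w‖ ^ 2 := by
  simp only [Complex.inner, Complex.sq_norm, Complex.normSq_apply, Complex.mul_re, Complex.conj_re,
    Complex.conj_im, map_mul, Complex.conj_I, Complex.mul_im, Complex.neg_re, Complex.neg_im,
    Complex.I_re, Complex.I_im]
  ring

lemma phaseFactor_period {P : ℝ} (hP : |ω| * P = 2 * π) : phaseFactor ω P = 1 := by
  rcases abs_choice ω with h | h <;> rw [h] at hP
  · rw [phaseFactor, hP]
    simp [Complex.exp_neg]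
  · rw [phaseFactor, ← neg_mul, hP]
    simp

lemma phaseFactor_quarter_period {P : ℝ} (hP : |ω| * P = 2 * π) :
    phaseFactor ω (P / 4) = -Complex.I ∨ phaseFactor ω (P / 4) = Complex.I := by
  have quarter (s : ℝ) (hs : s * P = 2 * π) : s * (P / 4) = π / 2 := by linarith
  rcases abs_choice ω with h | h <;> rw [h] at hP
  · left
    rw [phaseFactor, quarter ω hP]
    simp [Complex.exp_neg, Complex.exp_pi_div_two_mul_I]
  · right
    rw [phaseFactor, ← neg_mul, quarter _ hP]
    simp

/- The squared components at times a quarter of a period apart add up to `‖v‖²`. -/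
lemma integral_inner_rotatingInput_sq {P : ℝ} (hP : |ω| * P = 2 * π) (v : ℂ) :
    ∫ t in 0..P, (⟪rotatingInput ω t, v⟫ : ℝ) ^ 2 = 1 / 2 * P * ‖v‖ ^ 2 := by
  set f : ℝ → ℝ := fun t => (⟪rotatingInput ω t, v⟫ : ℝ) ^ 2
  have hf : Continuous f :=
    (((continuous_phaseFactor ω).mul continuous_const).inner continuous_const).pow 2
  have periodic : Function.Periodic f P := fun t => by
    simp only [f, rotatingInput, phaseFactor_add, phaseFactor_period hP, one_mul]
  have quarter (t : ℝ) : f t + f (t + P / 4) = ‖v‖ ^ 2 := by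
    have pythagoras := inner_sq_add_inner_mul_I_sq (rotatingInput ω t) v
    have unit : ‖rotatingInput ω t‖ = 1 := by
      rw [rotatingInput, norm_mul, norm_phaseFactor, Complex.norm_I, one_mul]
    rw [unit, one_pow, one_mul] at pythagoras
    rw [← pythagoras]
    have shift : rotatingInput ω (t + P / 4) = phaseFactor ω (P / 4) * rotatingInput ω t := by
      rw [rotatingInput, phaseFactor_add, rotatingInput, mul_assoc]
    rcases phaseFactor_quarter_period hP with h | h <;>
      simp only [f, shift, h, neg_mul, inner_neg_left, neg_sq, mul_comm Complex.I]
  have shifted : ∫ t in 0..P, f (t + P / 4) = ∫ t in 0..P, f t := by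
    rw [intervalIntegral.integral_comp_add_right, zero_add, add_comm,
      periodic.intervalIntegral_add_eq (P / 4) 0, zero_add]
  have sum : (∫ t in 0..P, f t) + ∫ t in 0..P, f (t + P / 4) = P * ‖v‖ ^ 2 := by
    rw [← intervalIntegral.integral_add (hf.intervalIntegrable _ _)
      (Continuous.intervalIntegrable (by fun_prop) _ _)]
    simp [quarter]
  linarith

lemma isExciting_rotatingInput {P : ℝ} (hP : |ω| * P = 2 * π) (hP0 : 0 < P) :
    IsExciting (rotatingInput ω) P (1 / 2) where
  continuous := (continuous_phaseFactor ω).mul continuous_const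
  period_pos := hP0
  periodic t := by simp only [rotatingInput, phaseFactor_add, phaseFactor_period hP, one_mul]
  norm_le_one t := by rw [rotatingInput, norm_mul, norm_phaseFactor, Complex.norm_I, one_mul]
  level_pos := by norm_num
  level_le_one := by norm_num
  le_integral_sq v := (integral_inner_rotatingInput_sq hP v).ge

lemma hasDerivAt_rotatingFrame {ι : Type*} {x : ℝ → ι → ℝ} {i j : ι} {p q t : ℝ}
    (hi : HasDerivAt (fun t => x t i) (-ω * x t j + p) t)
    (hj : HasDerivAt (fun t => x t j) (ω * x t i + q) t) :
    HasDerivAt (rotatingFrame ω x i j) (phaseFactor ω t * (p + q * Complex.I)) t := by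
  refine ((hasDerivAt_phaseFactor ω t).mul
    (hi.ofReal_comp.add (hj.ofReal_comp.mul_const Complex.I))).congr_deriv ?_
  simp only [Pi.add_apply]
  push_cast
  linear_combination phaseFactor ω t * (-ω * x t j) * Complex.I_sq

end RotatingFrame

section Plant

variable {σ : ℝ → ℝ} {ε k t₀ : ℝ} {x : ℝ → Fin 4 → ℝ}

lemma svf_eq (σ : ℝ → ℝ) (ε : ℝ) (K x : Fin 4 → ℝ) :
    Svf σ ε K x = ![-(2 * π / ε) * x 1 + x 2, 2 * π / ε * x 0 + x 3,
      -(2 * π / ε) * x 3, 2 * π / ε * x 2 - σ (∑ i, K i * x i)] := by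
  ext i
  fin_cases i <;> simp [Svf, J2mat, dotProduct, Fin.sum_univ_four]

lemma output_rotatingFrame (ω k : ℝ) (x : ℝ → Fin 4 → ℝ) (t : ℝ) :
    output (rotatingInput ω) k (rotatingFrame ω x 0 1) (rotatingFrame ω x 2 3) t =
      ∑ i, ![0, k ^ 2, 0, k] i * x t i := by
  rw [output, feedbackState, rotatingInput, rotatingFrame, rotatingFrame, ← mul_smul_comm,
    ← mul_smul_comm, ← mul_add, inner_phaseFactor_mul]
  simp [Complex.inner, Fin.sum_univ_four, -Complex.ofReal_pow]

lemma isTrajectory_rotatingFrame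
    (hx : ∀ t, t₀ ≤ t → HasDerivAt x (Svf σ ε ![0, k ^ 2, 0, k] (x t)) t) :
    IsTrajectory σ (rotatingInput (2 * π / ε)) k t₀
      (rotatingFrame (2 * π / ε) x 0 1) (rotatingFrame (2 * π / ε) x 2 3) where
  hasDerivAt_position t ht := by
    have hx' := hasDerivAt_pi.1 (svf_eq σ ε _ (x t) ▸ hx t ht)
    exact hasDerivAt_rotatingFrame (hx' 0) (hx' 1)
  hasDerivAt_velocity t ht := by
    have hx' := hasDerivAt_pi.1 (svf_eq σ ε _ (x t) ▸ hx t ht)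
    rw [output_rotatingFrame]
    refine (hasDerivAt_rotatingFrame (p := 0) (q := -σ (∑ i, ![0, k ^ 2, 0, k] i * x t i))
      ((hx' 2).congr_deriv (add_zero _).symm) (hx' 3)).congr_deriv ?_
    rw [rotatingInput, Complex.real_smul]
    push_cast
    ring

lemma norm_le_norm_rotatingFrame (ω t : ℝ) :
    ‖x t‖ ≤ ‖(rotatingFrame ω x 0 1 t, rotatingFrame ω x 2 3 t)‖ := by
  refine (pi_norm_le_iff_of_nonneg (norm_nonneg _)).2 fun i => ?_
  have component (a b : ℝ) : |a| ≤ ‖(a + b * Complex.I : ℂ)‖ ∧ |b| ≤ ‖(a + b * Complex.I : ℂ)‖ := by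
    constructor
    · simpa using Complex.abs_re_le_norm (a + b * Complex.I)
    · simpa using Complex.abs_im_le_norm (a + b * Complex.I)
  simp only [rotatingFrame, Prod.norm_mk, norm_mul, norm_phaseFactor, one_mul, le_max_iff]
  fin_cases i
  exacts [.inl (component _ _).1, .inl (component _ _).2, .inr (component _ _).1,
    .inr (component _ _).2]

lemma norm_rotatingFrame_le (ω t : ℝ) :
    ‖(rotatingFrame ω x 0 1 t, rotatingFrame ω x 2 3 t)‖ ≤ 2 * ‖x t‖ := by
  have planar (i j : Fin 4) : ‖(x t i + x t j * Complex.I : ℂ)‖ ≤ 2 * ‖x t‖ :=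
    calc ‖(x t i + x t j * Complex.I : ℂ)‖ ≤ ‖x t i‖ + ‖x t j‖ := by
          simpa using norm_add_le (x t i : ℂ) (x t j * Complex.I)
      _ ≤ 2 * ‖x t‖ := by linarith [norm_le_pi_norm (x t) i, norm_le_pi_norm (x t) j]
  simp only [rotatingFrame, Prod.norm_mk, norm_mul, norm_phaseFactor, one_mul]
  exact max_le (planar 0 1) (planar 2 3)

end Plant

theorem stmt3_general {σ : ℝ → ℝ} {L : NNReal} (hσ : IsConcaveFeedback σ L) {ε : ℝ}
    (hε : ε ≠ 0) : ∃ K : Fin 4 → ℝ, IsGAS (fun _ => Svf σ ε K) := by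
  have period : |2 * π / ε| * |ε| = 2 * π := by
    rw [← abs_mul, div_mul_cancel₀ _ hε, abs_of_pos two_pi_pos]
  have hu := isExciting_rotatingInput period (abs_pos.2 hε)
  obtain ⟨H, k, hk⟩ := exists_isTuned (L := L) (P := |ε|) hu.level_pos
  refine ⟨![0, k ^ 2, 0, k], fun δ hδ => ?_, fun t₀ _ x hx => ?_⟩
  · obtain ⟨η, hη, stable⟩ := IsTrajectory.exists_forall_norm_state_le hσ hu hk hδ
    refine ⟨η / 2, half_pos hη, fun t₀ _ x hx hx₀ t ht => ?_⟩
    exact (norm_le_norm_rotatingFrame (2 * π / ε) t).trans <|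
      stable t₀ _ _ (isTrajectory_rotatingFrame hx)
        ((norm_rotatingFrame_le (2 * π / ε) t₀).trans (by linarith)) t ht
  · have vanishing := ((isTrajectory_rotatingFrame hx).tendsto_state hσ hu hk).norm
    rw [norm_zero] at vanishing
    exact squeeze_zero_norm (norm_le_norm_rotatingFrame (2 * π / ε)) vanishing

/-- For every small enough `ε > 0` there is a linear feedback rendering `(S_ε)` GAS. -/
theorem stmt3 (σ : ℝ → ℝ) (hσ : IsSaturation σ) :
    ∃ ε₀ > 0, ∀ ε : ℝ, 0 < ε → ε < ε₀ →
      ∃ K : Fin 4 → ℝ, IsGAS (fun _ => Svf σ ε K) := by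
  obtain ⟨L, hσ⟩ := hσ.exists_isConcaveFeedback
  exact ⟨1, one_pos, fun ε hε _ => stmt3_general hσ hε.ne'⟩
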